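/- arXiv:2503.08994 — 2 statements merged into one kernel-verified Lean document; each statement's English description precedes it below -/
import Mathlib

section
/- Let T_l and T_r be finite types (tables) with key maps key_l : T_l → V and key_r : T_r → V into a finite linearly ordered type V, and decidable predicates Q_l : T_l → Prop, Q_r : T_r → Prop. Write c_l(v, Q_l) = |{t ∈ T_l : key_l(t) = v ∧ Q_l(t)}| and c_r(w, Q_r) = |{t ∈ T_r : key_r(t) = w ∧ Q_r(t)}|. Then the cardinality of the non-equi join with condition key_l ≥ key_r, filtered by the predicates, satisfies |{(l, r) ∈ T_l × T_r : key_l(l) ≥ key_r(r) ∧ Q_l(l) ∧ Q_r(r)}| = Σ_{v ∈ V} c_l(v, Q_l) · (Σ_{w ∈ V, w ≤ v} c_r(w, Q_r)). -/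
section

open Finset

variable {α β γ : Type*} [DecidableEq γ] {s : Finset α} {u : Finset γ} {f : α → γ}

theorem card_filter_product_eq_sum_card_fiber_mul (hf : ∀ a ∈ s, f a ∈ u)
    (t : Finset β) (R : γ → β → Prop) [∀ c b, Decidable (R c b)] :
    #{p ∈ s ×ˢ t | R (f p.1) p.2} = ∑ c ∈ u, #{a ∈ s | f a = c} * #{b ∈ t | R c b} :=
  calc #{p ∈ s ×ˢ t | R (f p.1) p.2}
      = ∑ a ∈ s, #{b ∈ t | R (f a) b} := by simp only [card_filter, sum_product]
    _ = ∑ c ∈ u, ∑ a ∈ s with f a = c, #{b ∈ t | R c b} :=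
      (sum_fiberwise_of_maps_to' hf fun c ↦ #{b ∈ t | R c b}).symm
    _ = ∑ c ∈ u, #{a ∈ s | f a = c} * #{b ∈ t | R c b} := by
      simp only [sum_const, smul_eq_mul]

theorem card_filter_comp_eq_sum_card_fiber (hf : ∀ a ∈ s, f a ∈ u)
    (P : γ → Prop) [DecidablePred P] :
    #{a ∈ s | P (f a)} = ∑ c ∈ u with P c, #{a ∈ s | f a = c} := by
  rw [sum_card_fiberwise_eq_card_filter]
  exact congrArg card (filter_congr fun a ha ↦ by simp only [mem_filter, hf a ha, true_and])

/-- The filter predicates `Q_l`, `Q_r` are absorbed into the sets of rows `rowsl`, `rowsr`. -/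
theorem stmt_5_general {V W Tl Tr : Type*} [DecidableEq V] [DecidableEq W]
    {keyl : Tl → V} {keyr : Tr → W} {rowsl : Finset Tl} {rowsr : Finset Tr}
    {keysl : Finset V} {keysr : Finset W}
    (hl : ∀ x ∈ rowsl, keyl x ∈ keysl) (hr : ∀ y ∈ rowsr, keyr y ∈ keysr)
    (θ : V → W → Prop) [∀ v w, Decidable (θ v w)] :
    #{p ∈ rowsl ×ˢ rowsr | θ (keyl p.1) (keyr p.2)}
      = ∑ v ∈ keysl, #{x ∈ rowsl | keyl x = v}
          * ∑ w ∈ keysr with θ v w, #{y ∈ rowsr | keyr y = w} := by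
  rw [card_filter_product_eq_sum_card_fiber_mul hl rowsr fun v y ↦ θ v (keyr y)]
  simp only [card_filter_comp_eq_sum_card_fiber hr]

end

/-- **Non-equi (`≥`) join cardinality via cumulative sums.** The cardinality of the
predicate-filtered join `{(l, r) : key_l(l) ≥ key_r(r) ∧ Q_l(l) ∧ Q_r(r)}` equals
`Σ_v c_l(v, Q_l) · (Σ_{w ≤ v} c_r(w, Q_r))`. -/
theorem stmt_5 {V : Type*} [Fintype V] [LinearOrder V]
    {Tl Tr : Type*} [Fintype Tl] [Fintype Tr]
    (keyl : Tl → V) (keyr : Tr → V)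
    (Ql : Tl → Prop) [DecidablePred Ql] (Qr : Tr → Prop) [DecidablePred Qr] :
    Fintype.card {p : Tl × Tr // keyr p.2 ≤ keyl p.1 ∧ Ql p.1 ∧ Qr p.2}
      = ∑ v : V, Fintype.card {x : Tl // keyl x = v ∧ Ql x}
          * ∑ w ∈ Finset.univ.filter (fun w => w ≤ v),
              Fintype.card {y : Tr // keyr y = w ∧ Qr y} := by
  simpa only [Fintype.card_subtype, ← Finset.filter_product, Finset.univ_product_univ,
    Finset.filter_filter, and_comm] using
    stmt_5_general (rowsl := {x | Ql x}) (rowsr := {y | Qr y})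
      (fun x _ ↦ Finset.mem_univ (keyl x)) (fun y _ ↦ Finset.mem_univ (keyr y)) fun v w ↦ w ≤ v
end

section
/- Let T_l and T_r be finite types (tables) with key maps key_l : T_l → V, key_r : T_r → V into a finite linearly ordered type V, decidable predicates Q_l, Q_r, and positive sizes N_l = |T_l|, N_r = |T_r|. Define p_l(v, Q_l) = |{t ∈ T_l : key_l(t) = v ∧ Q_l(t)}|/N_l and p_r(w, Q_r) analogously, with p_l(v), p_r(w) the versions with trivially-true predicates, and let card_{J≥} = Σ_{v ∈ V} c_l(v) · Σ_{w ≤ v} c_r(w) be the cardinality of the unfiltered ≥-join. If card_{J≥} > 0, then the cardinality of the predicate-filtered ≥-join equals card_{J≥} · (Σ_{v ∈ V} p_l(v, Q_l) · Σ_{w ≤ v} p_r(w, Q_r)) / (Σ_{v ∈ V} p_l(v) · Σ_{w ≤ v} p_r(w)). -/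
/-!
Group the pairs of the filtered join by their left key, and for each left key `v` group the right
tuples by their key: the cardinality becomes `∑ v, c_l(v, Q_l) * ∑ w with R v w, c_r(w, Q_r)`.
This expression is bilinear in the two count vectors, so passing from counts to probabilities
divides it by `N_l * N_r`; in the ratio of the filtered to the unfiltered sum this factor cancels,
and the unfiltered sum of counts is the unfiltered join cardinality itself.
-/

section JoinSum

variable {Vl Vr : Type*} [Fintype Vl] [Fintype Vr] (R : Vl → Vr → Prop) [∀ v, DecidablePred (R v)]

/-- The pairing of a weight `a` on left keys with a weight `b` on right keys along the join
condition `R`. The inner sum is the cumulative sum of `b` when `R v w` is `w ≤ v`; on tuple counts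
it gives the join cardinality, on key probabilities the join selectivity. -/
def joinSum {K : Type*} [NonUnitalNonAssocSemiring K] (a : Vl → K) (b : Vr → K) : K :=
  ∑ v, a v * ∑ w with R v w, b w

theorem cast_joinSum {K : Type*} [NonAssocSemiring K] (a : Vl → ℕ) (b : Vr → ℕ) :
    ((joinSum R a b : ℕ) : K) = joinSum R (fun v => (a v : K)) (fun w => (b w : K)) := by
  simp only [joinSum, Nat.cast_sum, Nat.cast_mul]

theorem joinSum_div_div {K : Type*} [Semifield K] (a : Vl → K) (b : Vr → K) (M N : K) :
    joinSum R (fun v => a v / M) (fun w => b w / N) = joinSum R a b / (M * N) := by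
  simp only [joinSum, ← Finset.sum_div, div_mul_div_comm]

end JoinSum

theorem card_subtype_comp_and_eq_sum_card_fiber {T V : Type*} [Fintype T] [Fintype V]
    [DecidableEq V] (key : T → V) (P : V → Prop) [DecidablePred P] (Q : T → Prop)
    [DecidablePred Q] :
    Fintype.card {t // P (key t) ∧ Q t} = ∑ v with P v, Fintype.card {t // key t = v ∧ Q t} := by
  have key_mem : ∀ t ∈ ({t | P (key t) ∧ Q t} : Finset T), key t ∈ ({v | P v} : Finset V) := by
    simp +contextual
  rw [Fintype.card_subtype, Finset.card_eq_sum_card_fiberwise key_mem]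
  refine Finset.sum_congr rfl fun v hv => ?_
  have hPv : P v := (Finset.mem_filter.mp hv).2
  rw [Fintype.card_subtype, Finset.filter_filter]
  congr 1
  grind

section Join

variable {Vl Vr Tl Tr : Type*} [Fintype Vl] [Fintype Vr] [DecidableEq Vl] [DecidableEq Vr]
  [Fintype Tl] [Fintype Tr] (R : Vl → Vr → Prop) [∀ v, DecidablePred (R v)]
  (keyl : Tl → Vl) (keyr : Tr → Vr)

theorem card_filtered_join_eq_joinSum (Ql : Tl → Prop) [DecidablePred Ql] (Qr : Tr → Prop)
    [DecidablePred Qr] :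
    Fintype.card {p : Tl × Tr // R (keyl p.1) (keyr p.2) ∧ Ql p.1 ∧ Qr p.2} =
      joinSum R (fun v => Fintype.card {x // keyl x = v ∧ Ql x})
        (fun w => Fintype.card {y // keyr y = w ∧ Qr y}) := by
  have card_left_fiber (v : Vl) :
      Fintype.card {p : Tl × Tr // keyl p.1 = v ∧ R (keyl p.1) (keyr p.2) ∧ Ql p.1 ∧ Qr p.2} =
        Fintype.card {x // keyl x = v ∧ Ql x} * Fintype.card {y // R v (keyr y) ∧ Qr y} := by
    rw [← Fintype.card_prod, ← Fintype.card_congr Equiv.subtypeProdEquivProd]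
    exact Fintype.card_congr (Equiv.subtypeEquivRight fun p => by grind)
  calc Fintype.card {p : Tl × Tr // R (keyl p.1) (keyr p.2) ∧ Ql p.1 ∧ Qr p.2}
    _ = ∑ v, Fintype.card
          {p : Tl × Tr // keyl p.1 = v ∧ R (keyl p.1) (keyr p.2) ∧ Ql p.1 ∧ Qr p.2} := by
      simpa using card_subtype_comp_and_eq_sum_card_fiber (fun p : Tl × Tr => keyl p.1)
        (fun _ => True) fun p => R (keyl p.1) (keyr p.2) ∧ Ql p.1 ∧ Qr p.2
    _ = ∑ v, Fintype.card {x // keyl x = v ∧ Ql x} *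
          ∑ w with R v w, Fintype.card {y // keyr y = w ∧ Qr y} := by
      simp only [card_left_fiber, card_subtype_comp_and_eq_sum_card_fiber keyr]

theorem card_join_eq_joinSum :
    Fintype.card {p : Tl × Tr // R (keyl p.1) (keyr p.2)} =
      joinSum R (fun v => Fintype.card {x // keyl x = v})
        (fun w => Fintype.card {y // keyr y = w}) := by
  simpa using card_filtered_join_eq_joinSum R keyl keyr (fun _ => True) (fun _ => True)

theorem stmt_7_general {K : Type*} [Semifield K] [CharZero K] (Ql : Tl → Prop) [DecidablePred Ql]
    (Qr : Tr → Prop) [DecidablePred Qr]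
    (hJ : 0 < joinSum R (fun v => Fintype.card {x // keyl x = v})
      (fun w => Fintype.card {y // keyr y = w})) :
    (Fintype.card {p : Tl × Tr // R (keyl p.1) (keyr p.2) ∧ Ql p.1 ∧ Qr p.2} : K) =
      (joinSum R (fun v => Fintype.card {x // keyl x = v})
          (fun w => Fintype.card {y // keyr y = w}) : ℕ) *
        joinSum R (fun v => (Fintype.card {x // keyl x = v ∧ Ql x} : K) / Fintype.card Tl)
          (fun w => (Fintype.card {y // keyr y = w ∧ Qr y} : K) / Fintype.card Tr) /
        joinSum R (fun v => (Fintype.card {x // keyl x = v} : K) / Fintype.card Tl)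
          (fun w => (Fintype.card {y // keyr y = w} : K) / Fintype.card Tr) := by
  obtain ⟨⟨x, y⟩, -⟩ : Nonempty {p : Tl × Tr // R (keyl p.1) (keyr p.2)} :=
    Fintype.card_pos_iff.mp (hJ.trans_eq (card_join_eq_joinSum R keyl keyr).symm)
  have : Nonempty Tl := ⟨x⟩
  have : Nonempty Tr := ⟨y⟩
  have hNl : (Fintype.card Tl : K) ≠ 0 := Nat.cast_ne_zero.mpr Fintype.card_ne_zero
  have hNr : (Fintype.card Tr : K) ≠ 0 := Nat.cast_ne_zero.mpr Fintype.card_ne_zero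
  have hJ_cast := (Nat.cast_ne_zero (R := K)).mpr hJ.ne'
  simp only [joinSum_div_div, card_filtered_join_eq_joinSum, cast_joinSum] at hJ_cast ⊢
  field_simp

end Join

/-- **Exactness of DistJoin's selectivity-based cardinality inference for `≥`-joins.**
With exact per-table probabilities `p(v, Q) = c(v, Q)/N` and unfiltered `≥`-join cardinality
`card_{J≥} = Σ_v c_l(v) · Σ_{w ≤ v} c_r(w) > 0`, the predicate-filtered `≥`-join cardinality
equals `card_{J≥} · (Σ_v p_l(v, Q_l) · Σ_{w ≤ v} p_r(w, Q_r)) / (Σ_v p_l(v) · Σ_{w ≤ v} p_r(w))`. -/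
theorem stmt_7 {V : Type*} [Fintype V] [LinearOrder V]
    {Tl Tr : Type*} [Fintype Tl] [Fintype Tr]
    (keyl : Tl → V) (keyr : Tr → V)
    (Ql : Tl → Prop) [DecidablePred Ql] (Qr : Tr → Prop) [DecidablePred Qr]
    (hNl : 0 < Fintype.card Tl) (hNr : 0 < Fintype.card Tr)
    (hJ : 0 < ∑ v : V, Fintype.card {x : Tl // keyl x = v}
        * ∑ w ∈ Finset.univ.filter (fun w => w ≤ v), Fintype.card {y : Tr // keyr y = w}) :
    (Fintype.card {p : Tl × Tr // keyr p.2 ≤ keyl p.1 ∧ Ql p.1 ∧ Qr p.2} : ℝ)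
      = ((∑ v : V, Fintype.card {x : Tl // keyl x = v}
            * ∑ w ∈ Finset.univ.filter (fun w => w ≤ v),
                Fintype.card {y : Tr // keyr y = w} : ℕ) : ℝ)
        * (∑ v : V, (Fintype.card {x : Tl // keyl x = v ∧ Ql x} : ℝ) / (Fintype.card Tl : ℝ)
            * ∑ w ∈ Finset.univ.filter (fun w => w ≤ v),
                (Fintype.card {y : Tr // keyr y = w ∧ Qr y} : ℝ) / (Fintype.card Tr : ℝ))
        / (∑ v : V, (Fintype.card {x : Tl // keyl x = v} : ℝ) / (Fintype.card Tl : ℝ)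
            * ∑ w ∈ Finset.univ.filter (fun w => w ≤ v),
                (Fintype.card {y : Tr // keyr y = w} : ℝ) / (Fintype.card Tr : ℝ)) :=
  stmt_7_general (fun v w => w ≤ v) keyl keyr Ql Qr hJ
end
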